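/- Let G be a graph whose bicircular lift matroid L(G) has at least two circuits, and let e, f be edges of G. Then {e, f} is a series pair of the matroid L(G) if and only if {e, f} is a series pair of the graph G. -/

import Mathlib

/-!
The lift matroid `L(G)` is the Higgs lift of the cycle matroid `M(G)`, and series pairs of a Higgs
lift `N` of any matroid `M` are those of `M` as soon as `N` has two circuits. Every circuit
of `N` is a union of circuits of `M`. Conversely, a circuit `C` of `M` and another circuit `D` give
a circuit `X` of `N` with `C ⊆ X ⊆ C ∪ D`, namely `C ∪ K` for a circuit `K ⊆ D` of `M ／ C`. Two
eliminations, one in `N` and one in `M`, supply a `D` that avoids both `e` and `f`, and then `X` and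
`C` meet `{e, f}` in the same set.

That cycles satisfy the circuit axioms comes from counting: the cycles are the minimal finite
nonempty edge sets with at least as many edges as vertices, and this count is submodular.
-/

open Set Matroid

universe u

namespace BLFormal

/-! ### Matroid preliminaries -/

/-- A circuit of a matroid: a minimal dependent set. -/
def Circuit {α : Type u} (M : Matroid α) (C : Set α) : Prop := Minimal M.Dep C

/-- Deletion of a set of elements from a matroid. -/
def del {α : Type u} (M : Matroid α) (D : Set α) : Matroid α := M ↾ (M.E \ D)

/-- Contraction of a set of elements of a matroid, defined by duality. -/
def con {α : Type u} (M : Matroid α) (C : Set α) : Matroid α := (del M✶ C)✶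

/-- `N` is a minor of `M` if it is obtained by a contraction followed by a deletion. -/
def IsMinor {α : Type u} (N M : Matroid α) : Prop := ∃ C D : Set α, N = del (con M C) D

/-- `N` is a proper (strict) minor of `M`. -/
def IsStrictMinor {α : Type u} (N M : Matroid α) : Prop := IsMinor N M ∧ N ≠ M

/-- The rank of a set `X` in the matroid `M`, as an extended natural number:
the supremum of the cardinalities of the independent subsets of `X`. -/
noncomputable def eRk {α : Type u} (M : Matroid α) (X : Set α) : ℕ∞ :=
  ⨆ I : {I : Set α // M.Indep I ∧ I ⊆ X}, (I : Set α).encard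

/-- The rank `r(M)` of a matroid, as an extended natural number. -/
noncomputable def eRank {α : Type u} (M : Matroid α) : ℕ∞ := eRk M M.E

/-- A loop of a matroid. -/
def MLoop {α : Type u} (M : Matroid α) (e : α) : Prop := M.Dep {e}

/-- A coloop of a matroid: a loop of the dual. -/
def MColoop {α : Type u} (M : Matroid α) (e : α) : Prop := MLoop M✶ e

/-- A `k`-separation of a matroid: a partition `(X, Y)` of the ground set with
`|X|, |Y| ≥ k` and `r(X) + r(Y) - r(M) ≤ k - 1`. -/
def IsKSep {α : Type u} (M : Matroid α) (k : ℕ) (X Y : Set α) : Prop :=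
  X ∪ Y = M.E ∧ Disjoint X Y ∧ (k : ℕ∞) ≤ X.encard ∧ (k : ℕ∞) ≤ Y.encard ∧
    eRk M X + eRk M Y ≤ eRank M + ((k - 1 : ℕ) : ℕ∞)

/-- A matroid is connected if it has no 1-separation. -/
def MConnected {α : Type u} (M : Matroid α) : Prop := ¬ ∃ X Y, IsKSep M 1 X Y

/-- A matroid is 3-connected if it is connected and has no 2-separation. -/
def ThreeConnected {α : Type u} (M : Matroid α) : Prop :=
  MConnected M ∧ ¬ ∃ X Y, IsKSep M 2 X Y

/-- Two elements of a matroid form a series pair if no circuit contains exactly one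
of them, and some circuit contains both. -/
def SeriesPair {α : Type u} (M : Matroid α) (e f : α) : Prop :=
  (∀ C, Circuit M C → (e ∈ C ↔ f ∈ C)) ∧ ∃ C, Circuit M C ∧ e ∈ C ∧ f ∈ C

/-- A series class: a maximal set in which every two elements form a series pair. -/
def IsSeriesClass {α : Type u} (M : Matroid α) (S : Set α) : Prop :=
  Maximal (fun T => T.Nonempty ∧ ∀ e ∈ T, ∀ f ∈ T, SeriesPair M e f) S

/-- `N` is a cosimplification `co(M)` of `M`: it is obtained from `M` by contracting
all coloops and, in each series class, all but one element. -/
def IsCosimplification {α : Type u} (M N : Matroid α) : Prop :=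
  ∃ D ⊆ M.E, N = con M D ∧ (∀ e, MColoop M e → e ∈ D) ∧
    ∀ S, IsSeriesClass M S → ∃ x ∈ S, S \ D = {x}

/-- `M` is isomorphic to the uniform matroid `U_{k, n}`: the ground set has `n` elements
and the circuits are precisely the `(k+1)`-element subsets of the ground set. -/
def IsUnif {α : Type u} (k n : ℕ) (M : Matroid α) : Prop :=
  M.E.encard = n ∧ ∀ C, Circuit M C ↔ C ⊆ M.E ∧ C.encard = k + 1

/-- `M` has a `U_{2,4}`-minor. -/
def HasU24Minor {α : Type u} (M : Matroid α) : Prop := ∃ N, IsMinor N M ∧ IsUnif 2 4 N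

/-- `M` is isomorphic to the direct sum `U_{2,4} ⊕ U_{0,1}` of `U_{2,4}` and a loop:
its ground set consists of a 4-element set `X` together with one further element `l`,
and its circuits are `{l}` and the 3-element subsets of `X`. -/
def IsU24PlusLoop {α : Type u} (M : Matroid α) : Prop :=
  ∃ (X : Set α) (l : α), l ∉ X ∧ M.E = insert l X ∧ X.encard = 4 ∧
    ∀ C, Circuit M C ↔ (C = {l} ∨ (C ⊆ X ∧ C.encard = 3))

/-- `M` is isomorphic to the Fano matroid `F₇`: the rank-3 matroid represented over
`GF(2)` by the seven nonzero vectors of `GF(2)³`. -/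
def IsFano {α : Type u} (M : Matroid α) : Prop :=
  ∃ v : α → (Fin 3 → ZMod 2),
    Set.BijOn v M.E {w | w ≠ 0} ∧
    ∀ I ⊆ M.E, (M.Indep I ↔ LinearIndependent (ZMod 2) (fun x : I => v x))

/-! ### Graphs (with loops and parallel edges allowed) -/

/-- A graph on vertex type `V`, with edge set `E` living in the ambient edge type `α`;
each edge is sent to the unordered pair of its end-vertices. -/
structure Graph (V : Type u) (α : Type u) where
  E : Set α
  inc : α → Sym2 V

namespace Graph

variable {V : Type u} {α : Type u}

/-- The vertices incident with an edge set `C`. -/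
def vertsOf (G : Graph V α) (C : Set α) : Set V := {v | ∃ e ∈ C, v ∈ G.inc e}

/-- The vertex set of a graph (we consider graphs without isolated vertices). -/
def verts (G : Graph V α) : Set V := G.vertsOf G.E

/-- Deletion of a set of edges from a graph. -/
def delete (G : Graph V α) (D : Set α) : Graph V α := ⟨G.E \ D, G.inc⟩

/-- The degree of a vertex `v` in the edge set `C`, with loops counting twice. -/
noncomputable def deg (G : Graph V α) (C : Set α) (v : V) : ℕ :=
  {e ∈ C | v ∈ G.inc e}.ncard + {e ∈ C | G.inc e = Sym2.diag v}.ncard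

/-- Two vertices are adjacent via an edge of `C`. -/
def AdjOn (G : Graph V α) (C : Set α) (u v : V) : Prop := ∃ e ∈ C, G.inc e = s(u, v)

/-- The subgraph with edge set `C` is connected. -/
def ConnectedOn (G : Graph V α) (C : Set α) : Prop :=
  ∀ u ∈ G.vertsOf C, ∀ v ∈ G.vertsOf C, Relation.ReflTransGen (G.AdjOn C) u v

/-- `C` is a cycle of `G` : the edge set of a connected 2-regular subgraph. -/
def IsCycle (G : Graph V α) (C : Set α) : Prop :=
  C ⊆ G.E ∧ C.Finite ∧ C.Nonempty ∧ (∀ v ∈ G.vertsOf C, G.deg C v = 2) ∧ G.ConnectedOn C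

/-- A graph is 2-edge-connected if each of its edges lies in a cycle. -/
def TwoEdgeConnected (G : Graph V α) : Prop := ∀ e ∈ G.E, ∃ C, G.IsCycle C ∧ e ∈ C

/-- A graph is connected if it has at least one vertex and any two of its
vertices are joined by a path. -/
def Connected (G : Graph V α) : Prop := G.verts.Nonempty ∧ G.ConnectedOn G.E

/-- Delete a vertex from a graph (removing all edges incident with it). -/
def delVert (G : Graph V α) (v : V) : Graph V α := ⟨{e ∈ G.E | v ∉ G.inc e}, G.inc⟩

/-- A graph is 2-connected if it is connected and stays connected after the
deletion of any vertex. -/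
def TwoConnected (G : Graph V α) : Prop :=
  G.Connected ∧ ∀ v ∈ G.verts, (G.delVert v).Connected

/-- `X` contains at least two (distinct) cycles of `G`. -/
def HasTwoCycles (G : Graph V α) (X : Set α) : Prop :=
  ∃ C₁ C₂, G.IsCycle C₁ ∧ G.IsCycle C₂ ∧ C₁ ≠ C₂ ∧ C₁ ⊆ X ∧ C₂ ⊆ X

/-- The circuits of the bicircular lift matroid of `G`: edge sets containing at
least two cycles and minimal with this property. -/
def LiftCircuit (G : Graph V α) (X : Set α) : Prop :=
  Minimal (fun Y => Y ⊆ G.E ∧ G.HasTwoCycles Y) X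

/-- Two edges of a graph form a series pair if no cycle contains exactly one of
them, and some cycle contains both. -/
def SeriesPair (G : Graph V α) (e f : α) : Prop :=
  (∀ C, G.IsCycle C → (e ∈ C ↔ f ∈ C)) ∧ ∃ C, G.IsCycle C ∧ e ∈ C ∧ f ∈ C

end Graph

/-- `N` is the bicircular lift matroid `L(G)` of `G` : its ground set is `E(G)`
and its circuits are the lift circuits of `G`. -/
def IsLiftRep {V α : Type u} (G : Graph V α) (N : Matroid α) : Prop :=
  N.E = G.E ∧ ∀ C, Circuit N C ↔ G.LiftCircuit C

/-- `N` is the cycle matroid `M(G)` of `G` : its ground set is `E(G)` and its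
circuits are the cycles of `G`. -/
def IsGraphicRep {V α : Type u} (G : Graph V α) (N : Matroid α) : Prop :=
  N.E = G.E ∧ ∀ C, Circuit N C ↔ G.IsCycle C

/-- A matroid is bicircular lift if it is (isomorphic to) `L(G)` for some graph `G`. -/
def IsBicircularLift {α : Type u} (N : Matroid α) : Prop :=
  ∃ (V : Type u) (G : Graph V α), IsLiftRep G N

/-- A matroid is graphic if it is (isomorphic to) the cycle matroid of some graph. -/
def IsGraphic {α : Type u} (N : Matroid α) : Prop :=
  ∃ (V : Type u) (G : Graph V α), IsGraphicRep G N

/-- The class `BL-bar` of matroids that are graphic or bicircular lift. -/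
def InBL {α : Type u} (N : Matroid α) : Prop := IsGraphic N ∨ IsBicircularLift N

/-- `M` is an excluded minor for the class `BL-bar`. -/
def ExcludedMinorBL {α : Type u} (M : Matroid α) : Prop :=
  ¬ InBL M ∧ ∀ N, IsStrictMinor N M → InBL N

/-! ### Special graphs and subdivisions -/

/-- `G` is (a copy of) the complete graph `K₄`. -/
def IsK4 {V α : Type u} (G : Graph V α) : Prop :=
  ∃ v : Fin 4 → V, Function.Injective v ∧
    ∃ ed : {p : Sym2 (Fin 4) // ¬ p.IsDiag} → α, Function.Injective ed ∧
      G.E = Set.range ed ∧ ∀ p, G.inc (ed p) = Sym2.map v p.1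

/-- `G` is (a copy of) the complete graph `K₅`. -/
def IsK5 {V α : Type u} (G : Graph V α) : Prop :=
  ∃ v : Fin 5 → V, Function.Injective v ∧
    ∃ ed : {p : Sym2 (Fin 5) // ¬ p.IsDiag} → α, Function.Injective ed ∧
      G.E = Set.range ed ∧ ∀ p, G.inc (ed p) = Sym2.map v p.1

/-- `G` is (a copy of) the complete bipartite graph `K₃,₃`. -/
def IsK33 {V α : Type u} (G : Graph V α) : Prop :=
  ∃ a b : Fin 3 → V, Function.Injective a ∧ Function.Injective b ∧
    Set.range a ∩ Set.range b = ∅ ∧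
    ∃ ed : Fin 3 × Fin 3 → α, Function.Injective ed ∧
      G.E = Set.range ed ∧ ∀ p, G.inc (ed p) = s(a p.1, b p.2)

/-- `G` is (a copy of) the graph `K₂ⁿ` with two vertices joined by `n` parallel edges. -/
def IsK2n {V α : Type u} (n : ℕ) (G : Graph V α) : Prop :=
  ∃ u v : V, u ≠ v ∧ ∃ ed : Fin n → α, Function.Injective ed ∧
    G.E = Set.range ed ∧ ∀ i, G.inc (ed i) = s(u, v)

/-- `H` is obtained from `G` by subdividing a single edge. -/
def ElemSub {V α : Type u} (G H : Graph V α) : Prop :=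
  ∃ e ∈ G.E, ∃ (f g : α) (u v w : V),
    G.inc e = s(u, v) ∧ w ∉ G.verts ∧ f ≠ g ∧
    f ∉ G.E \ {e} ∧ g ∉ G.E \ {e} ∧
    H.E = (G.E \ {e}) ∪ {f, g} ∧
    H.inc f = s(u, w) ∧ H.inc g = s(w, v) ∧
    ∀ x ∈ G.E \ {e}, H.inc x = G.inc x

/-- `H` is a subdivision of `G` : it is obtained from `G` by repeatedly
subdividing edges. -/
def IsSubdivision {V α : Type u} (G H : Graph V α) : Prop :=
  Relation.ReflTransGen ElemSub G H

/-! ### 2-sums and simplification -/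

/-- `N` is the 2-sum `N₁ ⊕₂ᵉ N₂` of `N₁` and `N₂` along `e`. -/
def Is2Sum {α : Type u} (N N₁ N₂ : Matroid α) (e : α) : Prop :=
  N₁.E ∩ N₂.E = {e} ∧
  ¬ MLoop N₁ e ∧ ¬ MColoop N₁ e ∧ ¬ MLoop N₂ e ∧ ¬ MColoop N₂ e ∧
  N.E = (N₁.E ∪ N₂.E) \ {e} ∧
  ∀ C, Circuit N C ↔
    ((Circuit N₁ C ∧ e ∉ C) ∨ (Circuit N₂ C ∧ e ∉ C) ∨
      ∃ C₁ C₂, Circuit N₁ C₁ ∧ Circuit N₂ C₂ ∧ e ∈ C₁ ∧ e ∈ C₂ ∧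
        C = (C₁ \ {e}) ∪ (C₂ \ {e}))

/-- `H` is a simplification `si(G)` of `G` : it is obtained from `G` by deleting all
loops and all but one edge of each parallel class. -/
def IsSimplification {V α : Type u} (G H : Graph V α) : Prop :=
  H.inc = G.inc ∧ H.E ⊆ G.E ∧ (∀ e ∈ H.E, ¬ (G.inc e).IsDiag) ∧
    ∀ e ∈ G.E, ¬ (G.inc e).IsDiag → ∃! f, f ∈ H.E ∧ G.inc f = G.inc e

/-- `H` is 2-connected, or is obtained from a 2-connected graph and a single edge `K₂`
by identifying one end-vertex of the edge with a vertex of the 2-connected graph. -/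
def TwoConnOrPendant {V α : Type u} (H : Graph V α) : Prop :=
  H.TwoConnected ∨
    ∃ (e : α) (u w : V), e ∈ H.E ∧ H.inc e = s(u, w) ∧ u ≠ w ∧
      (H.delete {e}).TwoConnected ∧ u ∈ (H.delete {e}).verts ∧ w ∉ (H.delete {e}).verts

/-! ### Finitary matroids from circuits -/

section CircuitFamily

variable {α : Type u} {𝓒 : Set (Set α)} {I J C : Set α} {x y : α}

/-- The circuit axioms of a finitary matroid: `𝓒` is an antichain of finite nonempty sets that
satisfies weak circuit elimination. -/
structure IsCircuitFamily (𝓒 : Set (Set α)) : Prop where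
  finite : ∀ C ∈ 𝓒, C.Finite
  nonempty : ∀ C ∈ 𝓒, C.Nonempty
  antichain : IsAntichain (· ⊆ ·) 𝓒
  elimination : ∀ C ∈ 𝓒, ∀ D ∈ 𝓒, C ≠ D → ∀ x ∈ C ∩ D, ∃ A ∈ 𝓒, A ⊆ (C ∪ D) \ {x}

/-- `I` contains no member of `𝓒`. If `𝓒` consists of the circuits of a matroid, these are its
independent sets, except that `I` may leave the ground set. -/
def CircuitFree (𝓒 : Set (Set α)) (I : Set α) : Prop := ∀ C ∈ 𝓒, ¬ C ⊆ I

theorem CircuitFree.subset (hJ : CircuitFree 𝓒 J) (hIJ : I ⊆ J) : CircuitFree 𝓒 I :=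
  fun C hC hCI => hJ C hC (hCI.trans hIJ)

theorem CircuitFree.mem_of_subset_insert (hI : CircuitFree 𝓒 I) (hC : C ∈ 𝓒)
    (hCI : C ⊆ insert x I) : x ∈ C :=
  by_contra fun h => hI C hC ((subset_insert_iff_of_notMem h).1 hCI)

theorem not_circuitFree_iff : ¬ CircuitFree 𝓒 I ↔ ∃ C ∈ 𝓒, C ⊆ I := by
  simp only [CircuitFree, not_forall, not_not, exists_prop]

theorem CircuitFree.exchange (h𝓒 : IsCircuitFamily 𝓒) (hI : CircuitFree 𝓒 I) (hC : C ∈ 𝓒)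
    (hCI : C ⊆ insert x I) (hy : y ∈ C) : CircuitFree 𝓒 (insert x I \ {y}) := by
  intro D hD hDI
  have hCD : C ≠ D := by
    rintro rfl
    exact (hDI hy).2 rfl
  have hxD := hI.mem_of_subset_insert hD (hDI.trans sdiff_subset)
  obtain ⟨A, hA, hACD⟩ :=
    h𝓒.elimination C hC D hD hCD x ⟨hI.mem_of_subset_insert hC hCI, hxD⟩
  refine hI A hA (hACD.trans ?_)
  rw [sdiff_singleton_subset_iff]
  exact union_subset hCI (hDI.trans sdiff_subset)

theorem CircuitFree.not_circuitFree_insert_exchange (h𝓒 : IsCircuitFamily 𝓒)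
    (hI : CircuitFree 𝓒 I) (hC : C ∈ 𝓒) (hCI : C ⊆ insert x I) {z : α} (hzI : z ∉ insert x I)
    (hz : ¬ CircuitFree 𝓒 (insert z I)) : ¬ CircuitFree 𝓒 (insert z (insert x I \ {y})) := by
  rw [not_circuitFree_iff] at hz ⊢
  obtain ⟨D, hD, hDI⟩ := hz
  by_cases hyD : y ∈ C ∩ D
  · have hCD : C ≠ D := by
      rintro rfl
      exact hzI (hCI (hI.mem_of_subset_insert hD hDI))
    obtain ⟨A, hA, hACD⟩ := h𝓒.elimination C hC D hD hCD y hyD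
    refine ⟨A, hA, hACD.trans ?_⟩
    grind
  · by_cases hyC : y ∈ C
    · exact ⟨D, hD, by grind⟩
    · exact ⟨C, hC, by grind⟩

/-- Elements of `J \ I` are exchanged into `I` one at a time, along circuits of `insert x I`. -/
theorem CircuitFree.ncard_le_of_forall_insert (h𝓒 : IsCircuitFamily 𝓒) (hI : CircuitFree 𝓒 I)
    (hIfin : I.Finite) (hJ : CircuitFree 𝓒 J) (hJfin : J.Finite)
    (hmax : ∀ x ∈ J \ I, ¬ CircuitFree 𝓒 (insert x I)) : J.ncard ≤ I.ncard := by
  induction hn : (J \ I).ncard generalizing I with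
  | zero =>
    have hJI : J ⊆ I := by rwa [ncard_eq_zero hJfin.sdiff, sdiff_eq_empty] at hn
    exact ncard_le_ncard hJI hIfin
  | succ n ih =>
    obtain ⟨x, hxJ, hxI⟩ : (J \ I).Nonempty := (ncard_pos hJfin.sdiff).1 (by omega)
    obtain ⟨C, hC, hCI⟩ := not_circuitFree_iff.1 (hmax x ⟨hxJ, hxI⟩)
    obtain ⟨y, hyC, hyJ⟩ := not_subset.1 (hJ C hC)
    have hyx : y ≠ x := by
      rintro rfl
      exact hyJ hxJ
    have hdiff : J \ (insert x I \ {y}) = (J \ I) \ {x} := by grind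
    have hcard : (insert x I \ {y}).ncard = I.ncard := by
      rw [ncard_sdiff_singleton_of_mem (hCI hyC), ncard_insert_of_notMem hxI hIfin,
        Nat.add_sub_cancel]
    rw [← hcard]
    refine ih (hI.exchange h𝓒 hC hCI hyC) (hIfin.insert x).sdiff (fun z hz => ?_) ?_
    · rw [hdiff] at hz
      refine hI.not_circuitFree_insert_exchange h𝓒 hC hCI ?_ (hmax z hz.1)
      exact fun h => h.elim hz.2 hz.1.2
    · rw [hdiff, ncard_sdiff_singleton_of_mem (mem_sdiff_of_mem hxJ hxI), hn, Nat.add_sub_cancel]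

theorem IsCircuitFamily.circuitFree_of_finite_subsets (h𝓒 : IsCircuitFamily 𝓒)
    (h : ∀ J ⊆ I, J.Finite → CircuitFree 𝓒 J) : CircuitFree 𝓒 I :=
  fun C hC hCI => h C hCI (h𝓒.finite C hC) C hC subset_rfl

/-- The matroid on `E` whose independent sets are the subsets of `E` that contain no member of the
circuit family `𝓒`. -/
def IsCircuitFamily.matroid (h𝓒 : IsCircuitFamily 𝓒) (E : Set α) : Matroid α :=
  IndepMatroid.matroid <| IndepMatroid.ofFinitaryCardAugment
    (E := E) (Indep := fun I => I ⊆ E ∧ CircuitFree 𝓒 I)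
    (indep_empty := ⟨empty_subset E,
      fun C hC h => (h𝓒.nonempty C hC).ne_empty (subset_empty_iff.1 h)⟩)
    (indep_subset := fun _ _ hJ hIJ => ⟨hIJ.trans hJ.1, hJ.2.subset hIJ⟩)
    (indep_aug := fun I J hI hIfin hJ hJfin hlt => by
      by_contra! hmax
      refine hlt.not_ge (hI.2.ncard_le_of_forall_insert h𝓒 hIfin hJ.2 hJfin fun x hx hfree => ?_)
      exact hmax x hx.1 hx.2 (insert_subset (hJ.1 hx.1) hI.1) hfree)
    (indep_compact := fun _ h =>
      ⟨fun x hx => (h {x} (singleton_subset_iff.2 hx) (finite_singleton x)).1 rfl,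
        h𝓒.circuitFree_of_finite_subsets fun J hJ hJfin => (h J hJ hJfin).2⟩)
    (subset_ground := fun _ hI => hI.1)

theorem IsCircuitFamily.matroid_dep_iff (h𝓒 : IsCircuitFamily 𝓒) {E X : Set α} :
    (h𝓒.matroid E).Dep X ↔ X ⊆ E ∧ ∃ C ∈ 𝓒, C ⊆ X := by
  rw [← not_circuitFree_iff]
  change ¬ (X ⊆ E ∧ CircuitFree 𝓒 X) ∧ X ⊆ E ↔ _
  tauto

theorem IsCircuitFamily.isCircuit_matroid_iff (h𝓒 : IsCircuitFamily 𝓒) {E : Set α}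
    (hE : ∀ C ∈ 𝓒, C ⊆ E) : (h𝓒.matroid E).IsCircuit C ↔ C ∈ 𝓒 := by
  simp only [isCircuit_iff, h𝓒.matroid_dep_iff]
  constructor
  · rintro ⟨⟨-, D, hD, hDC⟩, hmin⟩
    rwa [← hmin ⟨hE D hD, D, hD, subset_rfl⟩ hDC]
  · refine fun hC => ⟨⟨hE C hC, C, hC, subset_rfl⟩, ?_⟩
    rintro X ⟨-, D, hD, hDX⟩ hXC
    exact hXC.antisymm (h𝓒.antichain.eq hD hC (hDX.trans hXC) ▸ hDX)

end CircuitFamily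

/-! ### Series pairs of a Higgs lift -/

section HiggsLift

variable {α : Type u} {M N : Matroid α} {C D X : Set α} {e f : α}

/-- `X` contains at least two distinct circuits of `M`. -/
def HasTwoCircuits (M : Matroid α) (X : Set α) : Prop :=
  ∃ C₁ C₂, M.IsCircuit C₁ ∧ M.IsCircuit C₂ ∧ C₁ ≠ C₂ ∧ C₁ ⊆ X ∧ C₂ ⊆ X

/-- The circuits of the Higgs lift of `M`: the minimal sets that contain two circuits of `M`. -/
def HiggsLiftCircuit (M : Matroid α) (X : Set α) : Prop :=
  Minimal (fun Y => Y ⊆ M.E ∧ HasTwoCircuits M Y) X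

/-- `N` is the (elementary) Higgs lift of `M`, which for finite matroids is the dual of the
truncation of `M✶`. The bicircular lift matroid of a graph is the Higgs lift of its cycle
matroid. -/
structure IsHiggsLift (M N : Matroid α) : Prop where
  ground_eq : N.E = M.E
  isCircuit_iff : ∀ X, N.IsCircuit X ↔ HiggsLiftCircuit M X

theorem HasTwoCircuits.exists_isCircuit_notMem (hX : HasTwoCircuits M X) (e : α) :
    ∃ C ⊆ X, M.IsCircuit C ∧ e ∉ C := by
  obtain ⟨C₁, C₂, h₁, h₂, hne, h₁X, h₂X⟩ := hX
  obtain ⟨C, hCe, hC⟩ := h₁.elimination h₂ hne e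
  exact ⟨C, (hCe.trans sdiff_subset).trans (union_subset h₁X h₂X), hC, fun h => (hCe h).2 rfl⟩

theorem HiggsLiftCircuit.exists_eq_union (hX : HiggsLiftCircuit M X) :
    ∃ C D, M.IsCircuit C ∧ M.IsCircuit D ∧ X = C ∪ D := by
  obtain ⟨C, D, hC, hD, hne, hCX, hDX⟩ := hX.1.2
  refine ⟨C, D, hC, hD, Subset.antisymm (hX.2 ⟨?_, ?_⟩ ?_) (union_subset hCX hDX)⟩
  · exact union_subset hC.subset_ground hD.subset_ground
  · exact ⟨C, D, hC, hD, hne, subset_union_left, subset_union_right⟩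
  · exact union_subset hCX hDX

theorem HiggsLiftCircuit.exists_isCircuit_mem (hX : HiggsLiftCircuit M X) (he : e ∈ X) :
    ∃ C ⊆ X, M.IsCircuit C ∧ e ∈ C := by
  obtain ⟨C, D, hC, hD, rfl⟩ := hX.exists_eq_union
  exact he.elim (fun h => ⟨C, subset_union_left, hC, h⟩) fun h => ⟨D, subset_union_right, hD, h⟩

theorem exists_isCircuit_contract_subset (hC : M.IsCircuit C) (hD : M.IsCircuit D)
    (hne : C ≠ D) : ∃ K ⊆ D, (M ／ C).IsCircuit K := by
  have hDC : ¬ D ⊆ C := fun h => hne (hD.eq_of_subset_isCircuit hC h).symm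
  obtain ⟨K, hKD, hK⟩ := (hD.contract_dep_of_not_subset hDC).exists_isCircuit_subset
  exact ⟨K, hKD.trans sdiff_subset, hK⟩

/-- Every circuit of `M` inside `C ∪ K` other than `C` contains `K`. -/
theorem higgsLiftCircuit_union (hC : M.IsCircuit C) {K : Set α} (hK : (M ／ C).IsCircuit K) :
    HiggsLiftCircuit M (C ∪ K) := by
  have hdisj : Disjoint K C := (subset_sdiff.1 hK.subset_ground).2
  have hsub : ∀ A ⊆ C ∪ K, M.IsCircuit A → A ≠ C → K ⊆ A := by
    intro A hAX hA hAC
    have hdep : (M ／ C).Dep (A \ C) :=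
      hA.contract_dep_of_not_subset fun h => hAC (hA.eq_of_subset_isCircuit hC h)
    rw [← hK.eq_of_dep_subset hdep (sdiff_subset_iff.2 hAX)]
    exact sdiff_subset
  obtain ⟨x, hxK⟩ := hK.nonempty
  have hxC : x ∉ C := disjoint_left.1 hdisj hxK
  obtain ⟨D, hD, hKD, hDK⟩ := hK.exists_subset_isCircuit_of_contract
  refine ⟨⟨union_subset hC.subset_ground (hKD.trans hD.subset_ground), C, D, hC, hD, ?_,
    subset_union_left, union_comm K C ▸ hDK⟩, ?_⟩
  · rintro rfl
    exact hxC (hKD hxK)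
  · rintro Y ⟨-, hY⟩ hYX
    obtain ⟨A, hAY, hA, hxA⟩ := hY.exists_isCircuit_notMem x
    have hAC : A = C := by_contra fun h => hxA (hsub A (hAY.trans hYX) hA h hxK)
    obtain ⟨B, hBY, hB, hBC⟩ : ∃ B ⊆ Y, M.IsCircuit B ∧ B ≠ C := by
      obtain ⟨C₁, C₂, h₁, h₂, hne, h₁Y, h₂Y⟩ := hY
      by_cases h : C₁ = C
      · exact ⟨C₂, h₂Y, h₂, fun h' => hne (h.trans h'.symm)⟩
      · exact ⟨C₁, h₁Y, h₁, h⟩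
    exact union_subset (hAC ▸ hAY) ((hsub B (hBY.trans hYX) hB hBC).trans hBY)

theorem exists_higgsLiftCircuit (hC : M.IsCircuit C) (hD : M.IsCircuit D) (hne : C ≠ D) :
    ∃ X, HiggsLiftCircuit M X ∧ C ⊆ X ∧ X ⊆ C ∪ D := by
  obtain ⟨K, hKD, hK⟩ := exists_isCircuit_contract_subset hC hD hne
  exact ⟨C ∪ K, higgsLiftCircuit_union hC hK, subset_union_left, union_subset_union_right C hKD⟩

namespace IsHiggsLift

/-- Elimination in `N` removes `e` from a union of two circuits; elimination in `M`, applied to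
the resulting circuit of `N`, then removes `f`. -/
theorem exists_isCircuit_notMem_notMem (hN : IsHiggsLift M N)
    (htwo : ∃ C₁ C₂, Circuit N C₁ ∧ Circuit N C₂ ∧ C₁ ≠ C₂) (e f : α) :
    ∃ C, M.IsCircuit C ∧ e ∉ C ∧ f ∉ C := by
  obtain ⟨X, Y, hX, hY, hne⟩ := htwo
  obtain ⟨Z, hZe, hZ⟩ := IsCircuit.elimination hX hY hne e
  obtain ⟨C, hCZ, hC, hfC⟩ := ((hN.isCircuit_iff Z).1 hZ).1.2.exists_isCircuit_notMem f
  exact ⟨C, hC, fun h => (hZe (hCZ h)).2 rfl, hfC⟩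

theorem forall_circuit_mem_imp_mem_iff (hN : IsHiggsLift M N)
    (htwo : ∃ C₁ C₂, Circuit N C₁ ∧ Circuit N C₂ ∧ C₁ ≠ C₂) :
    (∀ X, Circuit N X → e ∈ X → f ∈ X) ↔ ∀ C, Circuit M C → e ∈ C → f ∈ C := by
  constructor
  · intro h C hC he
    obtain ⟨D, hD, heD, hfD⟩ := hN.exists_isCircuit_notMem_notMem htwo e f
    obtain ⟨X, hX, hCX, hXCD⟩ := exists_higgsLiftCircuit hC hD fun hCD => heD (hCD ▸ he)
    exact (hXCD (h X ((hN.isCircuit_iff X).2 hX) (hCX he))).resolve_right hfD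
  · intro h X hX he
    obtain ⟨C, hCX, hC, heC⟩ := ((hN.isCircuit_iff X).1 hX).exists_isCircuit_mem he
    exact hCX (h C hC heC)

theorem exists_circuit_mem_iff (hN : IsHiggsLift M N)
    (htwo : ∃ C₁ C₂, Circuit N C₁ ∧ Circuit N C₂ ∧ C₁ ≠ C₂) :
    (∃ X, Circuit N X ∧ e ∈ X) ↔ ∃ C, Circuit M C ∧ e ∈ C := by
  constructor
  · rintro ⟨X, hX, he⟩
    obtain ⟨C, -, hC, heC⟩ := ((hN.isCircuit_iff X).1 hX).exists_isCircuit_mem he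
    exact ⟨C, hC, heC⟩
  · rintro ⟨C, hC, he⟩
    obtain ⟨D, hD, heD, -⟩ := hN.exists_isCircuit_notMem_notMem htwo e e
    obtain ⟨X, hX, hCX, -⟩ := exists_higgsLiftCircuit hC hD fun hCD => heD (hCD ▸ he)
    exact ⟨X, (hN.isCircuit_iff X).2 hX, hCX he⟩

end IsHiggsLift

theorem seriesPair_iff : SeriesPair M e f ↔
    (∀ C, Circuit M C → e ∈ C → f ∈ C) ∧ (∀ C, Circuit M C → f ∈ C → e ∈ C) ∧
      ∃ C, Circuit M C ∧ e ∈ C := by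
  unfold SeriesPair
  grind

theorem statement_1_general (hN : IsHiggsLift M N)
    (htwo : ∃ C₁ C₂, Circuit N C₁ ∧ Circuit N C₂ ∧ C₁ ≠ C₂) (e f : α) :
    SeriesPair N e f ↔ SeriesPair M e f := by
  rw [seriesPair_iff, seriesPair_iff, hN.forall_circuit_mem_imp_mem_iff htwo,
    hN.forall_circuit_mem_imp_mem_iff htwo, hN.exists_circuit_mem_iff htwo]

end HiggsLift

/-! ### Cycle elimination by counting edges and vertices -/

namespace Graph

variable {V α : Type u} {G : Graph V α} {A B C D : Set α}

theorem vertsOf_mono (G : Graph V α) (h : D ⊆ C) : G.vertsOf D ⊆ G.vertsOf C :=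
  fun _ ⟨e, he, hv⟩ => ⟨e, h he, hv⟩

theorem vertsOf_union : G.vertsOf (C ∪ D) = G.vertsOf C ∪ G.vertsOf D := by
  ext v
  simp only [vertsOf, mem_union, mem_ofPred_eq, or_and_right, exists_or]

theorem finite_vertsOf (G : Graph V α) (hD : D.Finite) : (G.vertsOf D).Finite := by
  classical
  refine (hD.biUnion fun e _ => (G.inc e).toFinset.finite_toSet).subset ?_
  rintro v ⟨e, he, hv⟩
  exact mem_biUnion he (Sym2.mem_toFinset.2 hv)

theorem vertsOf_nonempty (G : Graph V α) (hD : D.Nonempty) : (G.vertsOf D).Nonempty :=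
  let ⟨e, he⟩ := hD
  ⟨_, e, he, (G.inc e).out_fst_mem⟩

theorem deg_lt_deg (hC : C.Finite) (hDC : D ⊆ C) {e : α} (he : e ∈ C \ D) {v : V}
    (hv : v ∈ G.inc e) : G.deg D v < G.deg C v := by
  have hsub (p : α → Prop) : {f ∈ D | p f} ⊆ {f ∈ C | p f} := fun _ hf => ⟨hDC hf.1, hf.2⟩
  have hssub : {f ∈ D | v ∈ G.inc f} ⊂ {f ∈ C | v ∈ G.inc f} :=
    (ssubset_iff_of_subset (hsub _)).2 ⟨e, ⟨he.1, hv⟩, fun h => he.2 h.1⟩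
  exact add_lt_add_of_lt_of_le (ncard_lt_ncard hssub (hC.sep _))
    (ncard_le_ncard (hsub _) (hC.sep _))

open Classical in
theorem card_filter_mem_add_card_filter_eq_diag (z : Sym2 V) {W : Finset V}
    (hz : ∀ v ∈ z, v ∈ W) : (W.filter (· ∈ z)).card + (W.filter (z = Sym2.diag ·)).card = 2 := by
  induction z with | h a b => ?_
  have ha := hz a (Sym2.mem_mk_left a b)
  have hb := hz b (Sym2.mem_mk_right a b)
  rcases eq_or_ne a b with rfl | hab
  · have hmem : W.filter (· ∈ s(a, a)) = {a} := by grind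
    have hdiag : W.filter (s(a, a) = Sym2.diag ·) = {a} := by grind [Sym2.diag, Sym2.eq_iff]
    rw [hmem, hdiag, Finset.card_singleton]
  · have hmem : W.filter (· ∈ s(a, b)) = {a, b} := by grind
    have hdiag : W.filter (s(a, b) = Sym2.diag ·) = ∅ := by grind [Sym2.diag, Sym2.eq_iff]
    rw [hmem, hdiag, Finset.card_pair hab, Finset.card_empty]

theorem sum_deg (G : Graph V α) (hD : D.Finite) :
    ∑ v ∈ (G.finite_vertsOf hD).toFinset, G.deg D v = 2 * D.ncard := by
  classical
  lift D to Finset α using hD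
  have hsep (p : α → Prop) : {e ∈ (D : Set α) | p e}.ncard = (D.filter p).card := by
    rw [← ncard_coe_finset, Finset.coe_filter]
    rfl
  have hcount := fun r : V → α → Prop =>
    Finset.sum_card_bipartiteAbove_eq_sum_card_bipartiteBelow (t := D)
      (s := (G.finite_vertsOf D.finite_toSet).toFinset) r
  simp only [Finset.bipartiteAbove, Finset.bipartiteBelow] at hcount
  simp only [deg, hsep, Finset.sum_add_distrib]
  rw [hcount fun v e => v ∈ G.inc e, hcount fun v e => G.inc e = Sym2.diag v,
    ← Finset.sum_add_distrib, ncard_coe_finset, mul_comm, ← smul_eq_mul, ← Finset.sum_const]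
  refine Finset.sum_congr rfl fun e he => ?_
  convert card_filter_mem_add_card_filter_eq_diag (G.inc e) fun v hv => ?_
  exact (G.finite_vertsOf D.finite_toSet).mem_toFinset.2 ⟨e, he, hv⟩

theorem ncard_vertsOf_eq_of_deg_eq_two (hD : D.Finite) (h : ∀ v ∈ G.vertsOf D, G.deg D v = 2) :
    (G.vertsOf D).ncard = D.ncard := by
  have hsum := G.sum_deg hD
  rw [Finset.sum_congr rfl (by simpa using h), Finset.sum_const, smul_eq_mul,
    ← ncard_eq_toFinset_card _ (G.finite_vertsOf hD)] at hsum
  omega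

theorem deg_eq_two_of_ncard_le (hD : D.Finite) (hcard : D.ncard ≤ (G.vertsOf D).ncard)
    (h : ∀ v ∈ G.vertsOf D, 2 ≤ G.deg D v) : ∀ v ∈ G.vertsOf D, G.deg D v = 2 := by
  have hle : ∀ v ∈ (G.finite_vertsOf hD).toFinset, 2 ≤ G.deg D v := by simpa using h
  have hsum : ∑ v ∈ (G.finite_vertsOf hD).toFinset, 2 =
      ∑ v ∈ (G.finite_vertsOf hD).toFinset, G.deg D v := by
    refine (Finset.sum_le_sum hle).antisymm ?_
    rw [G.sum_deg hD, Finset.sum_const, smul_eq_mul,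
      ← ncard_eq_toFinset_card _ (G.finite_vertsOf hD)]
    omega
  intro v hv
  exact ((Finset.sum_eq_sum_iff_of_le hle).1 hsum v (by simpa using hv)).symm

theorem connectedOn_iff : G.ConnectedOn D ↔
    ∀ A ⊆ D, A.Nonempty → Disjoint (G.vertsOf A) (G.vertsOf (D \ A)) → A = D := by
  constructor
  · intro hconn A hAD hA hdisj
    have hclosed : ∀ v ∈ G.vertsOf A, ∀ e ∈ D, v ∈ G.inc e → e ∈ A := fun v hv e he hve =>
      by_contra fun heA => disjoint_left.1 hdisj hv ⟨e, ⟨he, heA⟩, hve⟩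
    obtain ⟨u, hu⟩ := G.vertsOf_nonempty hA
    have hreach : ∀ w, Relation.ReflTransGen (G.AdjOn D) u w → w ∈ G.vertsOf A := by
      intro w hw
      induction hw with
      | refl => exact hu
      | tail _ hadj ih =>
        obtain ⟨e, he, hinc⟩ := hadj
        exact ⟨e, hclosed _ ih e he (hinc ▸ Sym2.mem_mk_left _ _), hinc ▸ Sym2.mem_mk_right _ _⟩
    refine hAD.antisymm fun e he => ?_
    have hw := (G.inc e).out_fst_mem
    exact hclosed _ (hreach _ (hconn u (G.vertsOf_mono hAD hu) _ ⟨e, he, hw⟩)) e he hw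
  · rintro h u ⟨e, he, hue⟩ w ⟨f, hf, hwf⟩
    let A := {g ∈ D | ∃ x ∈ G.inc g, Relation.ReflTransGen (G.AdjOn D) u x}
    have hreach : ∀ g ∈ A, ∀ x ∈ G.inc g, Relation.ReflTransGen (G.AdjOn D) u x := by
      rintro g ⟨hg, y, hy, huy⟩ x hx
      rcases eq_or_ne y x with rfl | hyx
      · exact huy
      · exact huy.tail ⟨g, hg, (Sym2.mem_and_mem_iff hyx).1 ⟨hy, hx⟩⟩
    have hAD : A = D := by
      refine h A (sep_subset _ _) ⟨e, he, u, hue, .refl⟩ (disjoint_left.2 ?_)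
      rintro x ⟨g, hg, hxg⟩ ⟨k, hk, hxk⟩
      exact hk.2 ⟨hk.1, x, hxk, hreach g hg x hxg⟩
    exact hreach f (hAD ▸ hf) w hwf

theorem IsCycle.ncard_vertsOf (hC : G.IsCycle C) : (G.vertsOf C).ncard = C.ncard :=
  ncard_vertsOf_eq_of_deg_eq_two hC.2.1 hC.2.2.2.1

theorem IsCycle.eq_of_subset (hD : G.IsCycle D) (hC : G.IsCycle C) (hDC : D ⊆ C) : D = C := by
  obtain ⟨-, -, hDne, hDdeg, -⟩ := hD
  obtain ⟨-, hCfin, -, hCdeg, hconn⟩ := hC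
  refine connectedOn_iff.1 hconn D hDC hDne (disjoint_left.2 fun v hvD ⟨e, he, hve⟩ => ?_)
  have hlt := deg_lt_deg hCfin hDC he hve
  rw [hDdeg v hvD, hCdeg v (G.vertsOf_mono hDC hvD)] at hlt
  exact hlt.false

/-- A finite nonempty edge set with at least as many edges as vertices. The minimal sets with this
property are the cycles. -/
def IsEdgeRich (G : Graph V α) (D : Set α) : Prop :=
  D.Finite ∧ D.Nonempty ∧ (G.vertsOf D).ncard ≤ D.ncard
theorem IsEdgeRich.exists_minimal_subset (hD : G.IsEdgeRich D) :
    ∃ A ⊆ D, Minimal G.IsEdgeRich A := by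
  have hfin : {A | A ⊆ D ∧ G.IsEdgeRich A}.Finite :=
    hD.1.finite_subsets.subset fun _ hA => hA.1
  obtain ⟨A, hAD, hA⟩ := hfin.exists_le_minimal ⟨subset_rfl, hD⟩
  exact ⟨A, hAD, hA.prop.2, fun B hB hBA => hA.2 ⟨hBA.trans hAD, hB⟩ hBA⟩

theorem ncard_lt_ncard_vertsOf_of_ssubset_minimal (hD : Minimal G.IsEdgeRich D) (hAD : A ⊂ D)
    (hA : A.Nonempty) : A.ncard < (G.vertsOf A).ncard := by
  by_contra! hle
  exact hD.not_prop_of_lt hAD ⟨hD.prop.1.subset hAD.subset, hA, hle⟩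

theorem vertsOf_sdiff_singleton_of_minimal (hD : Minimal G.IsEdgeRich D) {e : α} (he : e ∈ D)
    (hne : (D \ {e}).Nonempty) : G.vertsOf (D \ {e}) = G.vertsOf D := by
  have hlt := ncard_lt_ncard_vertsOf_of_ssubset_minimal hD (sdiff_singleton_ssubset.2 he) hne
  rw [ncard_sdiff_singleton_of_mem he] at hlt
  have hle := hD.prop.2.2
  exact eq_of_subset_of_ncard_le (G.vertsOf_mono sdiff_subset) (by omega)
    (G.finite_vertsOf hD.prop.1)

theorem ncard_vertsOf_of_minimal (hD : Minimal G.IsEdgeRich D) :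
    (G.vertsOf D).ncard = D.ncard := by
  obtain ⟨hfin, ⟨e, he⟩, hle⟩ := hD.prop
  refine hle.antisymm ?_
  rcases (D \ {e}).eq_empty_or_nonempty with hempty | hne
  · calc D.ncard ≤ ({e} : Set α).ncard := ncard_le_ncard (sdiff_eq_empty.1 hempty)
      _ = 1 := ncard_singleton e
      _ ≤ (G.vertsOf D).ncard :=
        (ncard_pos (G.finite_vertsOf hfin)).2 (G.vertsOf_nonempty ⟨e, he⟩)
  · have hlt := ncard_lt_ncard_vertsOf_of_ssubset_minimal hD (sdiff_singleton_ssubset.2 he) hne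
    rw [ncard_sdiff_singleton_of_mem he, vertsOf_sdiff_singleton_of_minimal hD he hne] at hlt
    omega

theorem two_le_deg_of_minimal (hD : Minimal G.IsEdgeRich D) {v : V} (hv : v ∈ G.vertsOf D) :
    2 ≤ G.deg D v := by
  obtain ⟨hfin, -, hcard⟩ := hD.prop
  obtain ⟨e, he, hve⟩ := hv
  rcases (D \ {e}).eq_empty_or_nonempty with hempty | hne
  · obtain rfl : D = {e} := (sdiff_eq_empty.1 hempty).antisymm (singleton_subset_iff.2 he)
    obtain ⟨w, hw⟩ := hve
    rw [ncard_singleton, ncard_le_one (G.finite_vertsOf hfin)] at hcard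
    obtain rfl : v = w := hcard v ⟨e, rfl, hw ▸ Sym2.mem_mk_left v w⟩ w
      ⟨e, rfl, hw ▸ Sym2.mem_mk_right v w⟩
    have hmem : 1 ≤ {f ∈ ({e} : Set α) | v ∈ G.inc f}.ncard :=
      (ncard_pos (hfin.sep _)).2 ⟨e, rfl, hw ▸ Sym2.mem_mk_left v v⟩
    have hloop : 1 ≤ {f ∈ ({e} : Set α) | G.inc f = Sym2.diag v}.ncard :=
      (ncard_pos (hfin.sep _)).2 ⟨e, rfl, hw⟩
    exact add_le_add hmem hloop
  · have hv : v ∈ G.vertsOf (D \ {e}) :=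
      vertsOf_sdiff_singleton_of_minimal hD he hne ▸ ⟨e, he, hve⟩
    obtain ⟨f, ⟨hf, hfe⟩, hvf⟩ := hv
    exact Nat.le_add_right_of_le
      ((one_lt_ncard (hfin.sep _)).2 ⟨e, ⟨he, hve⟩, f, ⟨hf, hvf⟩, Ne.symm hfe⟩)

theorem connectedOn_of_minimal (hD : Minimal G.IsEdgeRich D) : G.ConnectedOn D := by
  refine connectedOn_iff.2 fun A hAD hA hdisj => by_contra fun hne => ?_
  have hfin := hD.prop.1
  have hAssub : A ⊂ D := hAD.ssubset_of_ne hne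
  have hA_lt := ncard_lt_ncard_vertsOf_of_ssubset_minimal hD hAssub hA
  have hcompl_lt := ncard_lt_ncard_vertsOf_of_ssubset_minimal hD
    (hAD.sdiff_ssubset_of_nonempty hA) (nonempty_of_ssubset hAssub)
  have hverts : (G.vertsOf D).ncard = (G.vertsOf A).ncard + (G.vertsOf (D \ A)).ncard := by
    rw [← ncard_union_eq hdisj (G.finite_vertsOf (hfin.subset hAD)) (G.finite_vertsOf hfin.sdiff),
      ← vertsOf_union, union_sdiff_cancel hAD]
  have hedges : (D \ A).ncard + A.ncard = D.ncard := ncard_sdiff_add_ncard_of_subset hAD hfin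
  have hle := hD.prop.2.2
  omega

theorem isCycle_of_minimal (hD : Minimal G.IsEdgeRich D) (hDE : D ⊆ G.E) : G.IsCycle D :=
  ⟨hDE, hD.prop.1, hD.prop.2.1, deg_eq_two_of_ncard_le hD.prop.1 (ncard_vertsOf_of_minimal hD).ge
    fun _ hv => two_le_deg_of_minimal hD hv, connectedOn_of_minimal hD⟩

theorem IsEdgeRich.exists_isCycle_subset (hD : G.IsEdgeRich D) (hDE : D ⊆ G.E) :
    ∃ C ⊆ D, G.IsCycle C := by
  obtain ⟨C, hCD, hC⟩ := hD.exists_minimal_subset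
  exact ⟨C, hCD, isCycle_of_minimal hC (hCD.trans hDE)⟩

theorem IsCycle.ncard_lt_ncard_vertsOf_of_ssubset (hC : G.IsCycle C) (hA : A.Nonempty)
    (hAC : A ⊂ C) : A.ncard < (G.vertsOf A).ncard := by
  by_contra! hle
  have hrich : G.IsEdgeRich A := ⟨hC.2.1.subset hAC.subset, hA, hle⟩
  obtain ⟨B, hBA, hB⟩ := hrich.exists_isCycle_subset (hAC.subset.trans hC.1)
  exact hAC.not_subset (hB.eq_of_subset hC (hBA.trans hAC.subset) ▸ hBA)

/-- The submodular inequality `|V(C ∪ D)| + |V(C ∩ D)| ≤ |V(C)| + |V(D)| = |C| + |D|`, in which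
`|V(C ∩ D)|` exceeds `|C ∩ D|`, leaves an edge to spare in `C ∪ D`. -/
theorem IsCycle.ncard_vertsOf_union_lt (hC : G.IsCycle C) (hD : G.IsCycle D) (hCD : ¬ C ⊆ D)
    (hne : (C ∩ D).Nonempty) : (G.vertsOf (C ∪ D)).ncard < (C ∪ D).ncard := by
  have hCV := G.finite_vertsOf hC.2.1
  have hinter_lt : (C ∩ D).ncard < (G.vertsOf (C ∩ D)).ncard :=
    hC.ncard_lt_ncard_vertsOf_of_ssubset hne (inter_ssubset_left_iff.2 hCD)
  have hinter_le : (G.vertsOf (C ∩ D)).ncard ≤ (G.vertsOf C ∩ G.vertsOf D).ncard :=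
    ncard_le_ncard (subset_inter (G.vertsOf_mono inter_subset_left)
      (G.vertsOf_mono inter_subset_right)) (hCV.inter_of_left _)
  have hverts := ncard_union_add_ncard_inter (G.vertsOf C) (G.vertsOf D) hCV
    (G.finite_vertsOf hD.2.1)
  have hedges := ncard_union_add_ncard_inter C D hC.2.1 hD.2.1
  rw [← vertsOf_union, hC.ncard_vertsOf, hD.ncard_vertsOf] at hverts
  omega

theorem IsCycle.elimination (hC : G.IsCycle C) (hD : G.IsCycle D) (hne : C ≠ D) {x : α}
    (hx : x ∈ C ∩ D) : ∃ A ⊆ (C ∪ D) \ {x}, G.IsCycle A := by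
  have hCD : ¬ C ⊆ D := fun h => hne (hC.eq_of_subset hD h)
  obtain ⟨y, hyC, hyD⟩ := not_subset.1 hCD
  have hyx : y ≠ x := fun h => hyD (h ▸ hx.2)
  have hcard : (G.vertsOf ((C ∪ D) \ {x})).ncard ≤ ((C ∪ D) \ {x}).ncard := by
    have hlt := hC.ncard_vertsOf_union_lt hD hCD ⟨x, hx⟩
    have hle : (G.vertsOf ((C ∪ D) \ {x})).ncard ≤ (G.vertsOf (C ∪ D)).ncard :=
      ncard_le_ncard (G.vertsOf_mono sdiff_subset) (G.finite_vertsOf (hC.2.1.union hD.2.1))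
    rw [ncard_sdiff_singleton_of_mem (mem_union_left D hx.1)]
    omega
  have hrich : G.IsEdgeRich ((C ∪ D) \ {x}) :=
    ⟨(hC.2.1.union hD.2.1).sdiff, ⟨y, Or.inl hyC, hyx⟩, hcard⟩
  exact hrich.exists_isCycle_subset (sdiff_subset.trans (union_subset hC.1 hD.1))

theorem isCircuitFamily_isCycle (G : Graph V α) : IsCircuitFamily {C | G.IsCycle C} where
  finite _ hC := hC.2.1
  nonempty _ hC := hC.2.2.1
  antichain _ hC _ hD hne hCD := hne (IsCycle.eq_of_subset hC hD hCD)
  elimination _ hC _ hD hne _ hx :=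
    let ⟨A, hA, hAcycle⟩ := IsCycle.elimination hC hD hne hx
    ⟨A, hAcycle, hA⟩

theorem exists_isGraphicRep (G : Graph V α) : ∃ M, IsGraphicRep G M :=
  ⟨G.isCircuitFamily_isCycle.matroid G.E, rfl, fun _ =>
    G.isCircuitFamily_isCycle.isCircuit_matroid_iff fun _ hC => hC.1⟩

end Graph

section GraphicRep

variable {V α : Type u} {G : Graph V α} {M N : Matroid α}

theorem IsGraphicRep.seriesPair_iff (hM : IsGraphicRep G M) {e f : α} :
    SeriesPair M e f ↔ G.SeriesPair e f := by
  simp only [SeriesPair, Graph.SeriesPair, hM.2]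

theorem IsGraphicRep.higgsLiftCircuit_iff (hM : IsGraphicRep G M) {X : Set α} :
    HiggsLiftCircuit M X ↔ G.LiftCircuit X := by
  have hcircuit : ∀ C, M.IsCircuit C ↔ G.IsCycle C := hM.2
  simp only [HiggsLiftCircuit, HasTwoCircuits, Graph.LiftCircuit, Graph.HasTwoCycles, hcircuit,
    hM.1]

theorem IsGraphicRep.isHiggsLift (hM : IsGraphicRep G M) (hN : IsLiftRep G N) :
    IsHiggsLift M N where
  ground_eq := hN.1.trans hM.1.symm
  isCircuit_iff X := (hN.2 X).trans hM.higgsLiftCircuit_iff.symm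

end GraphicRep

theorem statement_1 {V α : Type u} (G : Graph V α) (N : Matroid α)
    (hrep : IsLiftRep G N)
    (htwo : ∃ C₁ C₂, Circuit N C₁ ∧ Circuit N C₂ ∧ C₁ ≠ C₂)
    (e f : α) (he : e ∈ G.E) (hf : f ∈ G.E) :
    SeriesPair N e f ↔ G.SeriesPair e f := by
  obtain ⟨M, hM⟩ := G.exists_isGraphicRep
  exact (statement_1_general (hM.isHiggsLift hrep) htwo e f).trans hM.seriesPair_iff

end BLFormal
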